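/- arXiv:1303.3122 — 3 statements merged into one kernel-verified Lean document; each statement's English description precedes it below -/
import Mathlib

section
/- For α ∈ (-1, 0), the function h_α(t) = (1 + 1/t)^α is a Bernstein function on (0, ∞), i.e., h_α is nonnegative on (0,∞), has derivatives of all orders, and its first derivative h_α′ is completely monotonic on (0, ∞). -/
open Real

/-!
On `(0, ∞)` the derivative of `(1 + 1 / t) ^ α` is `-α * (t ^ (-1 - α) * (t + 1) ^ (α - 1))`. For
`-1 ≤ α ≤ 0` both exponents are nonpositive, so both powers are completely monotone: the successive
derivatives of `t ^ p` carry the signs of the falling factorials of `p ≤ 0`. By Leibniz' rule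
products of completely monotone functions are again completely monotone.
-/

/-- A function is completely monotone on `s` if it is smooth there and its iterated derivatives
alternate in sign, starting from a nonnegative function. The derivatives are taken within `s`, which
is meant to have unique derivatives, so that intervals containing endpoints are allowed. -/
structure CompletelyMonotoneOn (f : ℝ → ℝ) (s : Set ℝ) : Prop where
  contDiffOn : ContDiffOn ℝ (⊤ : ℕ∞) f s
  neg_one_pow_mul_iteratedDerivWithin_nonneg :
    ∀ (n : ℕ) ⦃t : ℝ⦄, t ∈ s → 0 ≤ (-1) ^ n * iteratedDerivWithin n f s t

namespace CompletelyMonotoneOn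

variable {f g : ℝ → ℝ} {s : Set ℝ}

theorem congr (hf : CompletelyMonotoneOn f s) (hgf : s.EqOn g f) : CompletelyMonotoneOn g s where
  contDiffOn := hf.contDiffOn.congr hgf
  neg_one_pow_mul_iteratedDerivWithin_nonneg n t ht := by
    rw [iteratedDerivWithin_congr hgf ht]
    exact hf.neg_one_pow_mul_iteratedDerivWithin_nonneg n ht

theorem const_mul {c : ℝ} (hf : CompletelyMonotoneOn f s) (hc : 0 ≤ c) :
    CompletelyMonotoneOn (fun t => c * f t) s where
  contDiffOn := contDiffOn_const.mul hf.contDiffOn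
  neg_one_pow_mul_iteratedDerivWithin_nonneg n t ht := by
    rw [iteratedDerivWithin_const_mul_field, mul_left_comm]
    exact mul_nonneg hc (hf.neg_one_pow_mul_iteratedDerivWithin_nonneg n ht)

theorem mul (hf : CompletelyMonotoneOn f s) (hg : CompletelyMonotoneOn g s)
    (hs : UniqueDiffOn ℝ s) : CompletelyMonotoneOn (f * g) s where
  contDiffOn := hf.contDiffOn.mul hg.contDiffOn
  neg_one_pow_mul_iteratedDerivWithin_nonneg n t ht := by
    have smooth {h : ℝ → ℝ} (hh : CompletelyMonotoneOn h s) : ContDiffWithinAt ℝ n h s t :=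
      (hh.contDiffOn t ht).of_le (mod_cast le_top)
    rw [iteratedDerivWithin_mul ht hs (smooth hf) (smooth hg), Finset.mul_sum]
    refine Finset.sum_nonneg fun i hi => ?_
    have hin : i ≤ n := Finset.mem_range_succ_iff.mp hi
    calc
      0 ≤ (n.choose i : ℝ) * (((-1) ^ i * iteratedDerivWithin i f s t) *
            ((-1) ^ (n - i) * iteratedDerivWithin (n - i) g s t)) :=
        mul_nonneg (Nat.cast_nonneg _)
          (mul_nonneg (hf.neg_one_pow_mul_iteratedDerivWithin_nonneg i ht)
            (hg.neg_one_pow_mul_iteratedDerivWithin_nonneg (n - i) ht))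
      _ = (-1) ^ n * (n.choose i * iteratedDerivWithin i f s t *
            iteratedDerivWithin (n - i) g s t) := by
        rw [← pow_mul_pow_sub (-1 : ℝ) hin]
        ring

theorem mono {u : Set ℝ} (hf : CompletelyMonotoneOn f s) (hus : u ⊆ s) (hu : UniqueDiffOn ℝ u)
    (hs : UniqueDiffOn ℝ s) : CompletelyMonotoneOn f u where
  contDiffOn := hf.contDiffOn.mono hus
  neg_one_pow_mul_iteratedDerivWithin_nonneg n t ht := by
    have hsub : iteratedDerivWithin n f u t = iteratedDerivWithin n f s t := by
      rw [iteratedDerivWithin, iteratedDerivWithin, iteratedFDerivWithin_subset hus hu hs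
        (hf.contDiffOn.of_le (mod_cast le_top)) ht]
    rw [hsub]
    exact hf.neg_one_pow_mul_iteratedDerivWithin_nonneg n (hus ht)

theorem neg_one_pow_mul_iteratedDeriv_nonneg (hf : CompletelyMonotoneOn f s) (hs : IsOpen s)
    (n : ℕ) {t : ℝ} (ht : t ∈ s) : 0 ≤ (-1) ^ n * iteratedDeriv n f t := by
  rw [← iteratedDerivWithin_of_isOpen hs ht]
  exact hf.neg_one_pow_mul_iteratedDerivWithin_nonneg n ht

end CompletelyMonotoneOn

theorem neg_one_pow_mul_descPochhammer_eval_nonneg {R : Type*} [Ring R] [PartialOrder R]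
    [IsStrictOrderedRing R] {p : R} (hp : p ≤ 0) (n : ℕ) :
    0 ≤ (-1) ^ n * (descPochhammer R n).eval p := by
  rw [← ascPochhammer_eval_neg_eq_descPochhammer]
  rcases hp.eq_or_lt with rfl | hp
  · rw [neg_zero, ascPochhammer_eval_zero]
    split_ifs <;> norm_num
  · exact (ascPochhammer_pos n (-p) (neg_pos.mpr hp)).le

theorem completelyMonotoneOn_add_const_rpow (c : ℝ) {p : ℝ} (hp : p ≤ 0) :
    CompletelyMonotoneOn (fun t => (t + c) ^ p) (Set.Ioi (-c)) where
  contDiffOn := (contDiffOn_id.add contDiffOn_const).rpow_const_of_ne fun t ht =>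
    (neg_lt_iff_pos_add.mp ht).ne'
  neg_one_pow_mul_iteratedDerivWithin_nonneg n t ht := by
    have htc : 0 < t + c := neg_lt_iff_pos_add.mp ht
    have hderiv : iteratedDerivWithin n (fun t => (t + c) ^ p) (Set.Ioi (-c)) t =
        (descPochhammer ℝ n).eval p * (t + c) ^ (p - n) := by
      rw [iteratedDerivWithin_of_isOpen isOpen_Ioi ht,
        congr_fun (iteratedDeriv_comp_add_const n (fun t => t ^ p) c) t,
        iteratedDeriv_eq_iterate, iter_deriv_rpow_const]
    rw [hderiv, ← mul_assoc]
    exact mul_nonneg (neg_one_pow_mul_descPochhammer_eval_nonneg hp n) (rpow_nonneg htc.le _)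

theorem contDiffOn_one_add_one_div_rpow (α : ℝ) :
    ContDiffOn ℝ (⊤ : ℕ∞) (fun s : ℝ => (1 + 1 / s) ^ α) (Set.Ioi 0) := by
  have hbase : ContDiffOn ℝ (⊤ : ℕ∞) (fun s : ℝ => 1 + 1 / s) (Set.Ioi 0) :=
    contDiffOn_const.add (contDiffOn_const.div contDiffOn_id fun _ hs => ne_of_gt hs)
  exact hbase.rpow_const_of_ne fun s (hs : 0 < s) => by positivity

theorem deriv_one_add_one_div_rpow (α : ℝ) {t : ℝ} (ht : 0 < t) :
    deriv (fun s : ℝ => (1 + 1 / s) ^ α) t = -α * (t ^ (-1 - α) * (t + 1) ^ (α - 1)) := by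
  have hbase : HasDerivAt (fun s : ℝ => 1 + 1 / s) (-(t ^ 2)⁻¹) t := by
    simpa only [one_div] using (hasDerivAt_inv ht.ne').const_add 1
  have hpow : t ^ (-1 - α) = (t ^ 2)⁻¹ / t ^ (α - 1) := by
    rw [← rpow_natCast, ← rpow_neg ht.le, ← rpow_sub ht]
    congr 1
    push_cast
    ring
  rw [(hbase.rpow_const (Or.inl (by positivity))).deriv, hpow,
    one_add_div ht.ne', div_rpow (by positivity) ht.le]
  ring

theorem completelyMonotoneOn_deriv_one_add_one_div_rpow {α : ℝ} (hα : α ∈ Set.Icc (-1) 0) :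
    CompletelyMonotoneOn (deriv fun s : ℝ => (1 + 1 / s) ^ α) (Set.Ioi 0) := by
  have hpow : CompletelyMonotoneOn (fun t => t ^ (-1 - α)) (Set.Ioi 0) := by
    simpa only [add_zero, neg_zero] using
      completelyMonotoneOn_add_const_rpow 0 (show -1 - α ≤ 0 by linarith [hα.1])
  have hpow_add_one : CompletelyMonotoneOn (fun t => (t + 1) ^ (α - 1)) (Set.Ioi 0) :=
    (completelyMonotoneOn_add_const_rpow 1 (by linarith [hα.2])).mono
      (Set.Ioi_subset_Ioi (by norm_num)) (uniqueDiffOn_Ioi 0) (uniqueDiffOn_Ioi (-1))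
  exact ((hpow.mul hpow_add_one (uniqueDiffOn_Ioi 0)).const_mul (neg_nonneg.mpr hα.2)).congr
    fun t ht => deriv_one_add_one_div_rpow α ht

theorem h_alpha_bernstein
    (α : ℝ) (hα : α ∈ Set.Ioo (-1 : ℝ) 0) :
    (∀ t : ℝ, 0 < t → 0 ≤ (1 + 1 / t) ^ α) ∧
      ContDiffOn ℝ (⊤ : ℕ∞) (fun s : ℝ => (1 + 1 / s) ^ α) (Set.Ioi 0) ∧
      ∀ n : ℕ, ∀ t : ℝ, 0 < t →
        0 ≤ (-1 : ℝ) ^ n *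
          iteratedDeriv n (deriv (fun s : ℝ => (1 + 1 / s) ^ α)) t := by
  have hderiv := completelyMonotoneOn_deriv_one_add_one_div_rpow (Set.Ioo_subset_Icc_self hα)
  exact ⟨fun t ht => by positivity,
    contDiffOn_one_add_one_div_rpow α,
    fun n _ ht => hderiv.neg_one_pow_mul_iteratedDeriv_nonneg isOpen_Ioi n ht⟩
end

section
/- Let α ∈ (0, 1) and define H_α(t) = h_α(t)/α − h_{α−1}(t)/(α−1) for t > 0, where h_β(t) = (1 + 1/t)^β. Then for every integer m ≥ 1 and every t > 0, the m-th derivative of H_α satisfies H_α^(m)(t) = ((-1)^m / (t^m (1+t)^{m+1})) · (1 + 1/t)^α · Σ_{k=0}^{m-1} b_{α,m,k} t^k, where b_{α,m,k} = k! · C(m+1,k) · C(m-1,k) · Π_{ℓ=1}^{m-k-1} (α + ℓ). -/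
open Real Finset

/-! Since `h_β' = -β h_β / (t (1 + t))`, a function `h_α f / (t ^ a (1 + t) ^ b)` has derivative
`-h_α f₁ / (t ^ (a + 1) (1 + t) ^ (b + 1))`, where `f₁ = (α + a (1 + t) + b t) f - t (1 + t) f'`.
In `H_α'` the two terms combine to `-h_α / (t (1 + t) ^ 2)`, so every derivative has the asserted
shape with some polynomial numerator. For `a = n + 1` and `b = n + 2` the operator `f ↦ f₁` turns
coefficients `c n k` into `c (n + 1) (k + 1) = (α + n - k) * c n (k + 1) + (2 n + 3 - k) * c n k`,
and the claimed closed form satisfies this recurrence. -/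

section Coefficients

variable {R : Type*} [CommRing R]

lemma cast_choose_succ_right_mul (n k : ℕ) :
    (n.choose (k + 1) : R) * (k + 1) = n.choose k * (n - k) := by
  rcases le_or_gt k n with hkn | hnk
  · rw [← Nat.cast_sub hkn]
    exact_mod_cast congrArg (Nat.cast (R := R)) (Nat.choose_succ_right_eq n k)
  · simp [Nat.choose_eq_zero_of_lt hnk, Nat.choose_eq_zero_of_lt (hnk.trans k.lt_succ_self)]

lemma succ_mul_choose_succ_mul_choose_succ (a b k : ℕ) :
    ((k : R) + 1) * (a + 1).choose (k + 1) * (b + 1).choose (k + 1) =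
      (k + 1) * a.choose (k + 1) * b.choose (k + 1) +
        (a + b + 1 - k) * a.choose k * b.choose k := by
  rw [Nat.choose_succ_succ a, Nat.choose_succ_succ b]
  push_cast
  linear_combination (b.choose k : R) * cast_choose_succ_right_mul (R := R) a k +
    (a.choose k : R) * cast_choose_succ_right_mul (R := R) b k

/-- The coefficient `b_{α, m, k}` of the numerator of the `m`-th derivative of `H_α`, indexed by
`n = m - 1` so that no subtraction of `1` from `m` occurs. -/
def derivCoeff (α : R) (n k : ℕ) : R :=
  k.factorial * (n + 2).choose k * n.choose k * ∏ ℓ ∈ range (n - k), (α + (ℓ + 1))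

lemma derivCoeff_eq_zero_of_lt (α : R) {n k : ℕ} (hnk : n < k) : derivCoeff α n k = 0 := by
  simp [derivCoeff, Nat.choose_eq_zero_of_lt hnk]

lemma derivCoeff_succ_zero (α : R) (n : ℕ) :
    derivCoeff α (n + 1) 0 = (α + n + 1) * derivCoeff α n 0 := by
  simp only [derivCoeff, Nat.choose_zero_right, Nat.sub_zero, prod_range_succ]
  ring

lemma choose_succ_mul_prod_range_sub (α : R) (n k : ℕ) :
    (n.choose (k + 1) : R) * ∏ ℓ ∈ range (n - k), (α + (ℓ + 1)) =
      (α + n - k) * (n.choose (k + 1) * ∏ ℓ ∈ range (n - (k + 1)), (α + (ℓ + 1))) := by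
  rcases lt_or_ge k n with hkn | hnk
  · obtain ⟨d, rfl⟩ := Nat.exists_eq_add_of_lt hkn
    rw [show k + d + 1 - k = d + 1 by lia, show k + d + 1 - (k + 1) = d by lia, prod_range_succ]
    push_cast
    ring
  · simp [Nat.choose_eq_zero_of_lt (Nat.lt_succ_of_le hnk)]

lemma derivCoeff_succ_succ (α : R) (n k : ℕ) :
    derivCoeff α (n + 1) (k + 1) =
      (α + n - k) * derivCoeff α n (k + 1) + (2 * n + 3 - k) * derivCoeff α n k := by
  have hchoose := succ_mul_choose_succ_mul_choose_succ (R := R) (n + 2) n k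
  have hprod := choose_succ_mul_prod_range_sub α n k
  simp only [derivCoeff, Nat.factorial_succ, Nat.add_sub_add_right,
    show n + 1 + 2 = n + 2 + 1 by lia]
  push_cast at hchoose ⊢
  linear_combination (k.factorial : R) * (∏ ℓ ∈ range (n - k), (α + (ℓ + 1))) * hchoose +
    ((k : R) + 1) * k.factorial * (n + 2).choose (k + 1) * hprod

end Coefficients

section Numerator

open Polynomial

variable {R : Type*} [CommRing R]

/-- The polynomial `∑ k, b_{α, n + 1, k} X ^ k` in the numerator of the `(n + 1)`-st derivative of
`H_α`. -/
noncomputable def derivNumerator (α : R) (n : ℕ) : R[X] :=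
  ∑ k ∈ range (n + 1), C (derivCoeff α n k) * X ^ k

lemma coeff_derivNumerator (α : R) (n k : ℕ) :
    (derivNumerator α n).coeff k = derivCoeff α n k := by
  simp only [derivNumerator, finsetSum_coeff, coeff_C_mul_X_pow, sum_ite_eq, mem_range]
  split_ifs with hk
  · rfl
  · exact (derivCoeff_eq_zero_of_lt α (by lia)).symm

lemma eval_derivNumerator (α : R) (n : ℕ) (t : R) :
    (derivNumerator α n).eval t = ∑ k ∈ range (n + 1), derivCoeff α n k * t ^ k := by
  simp [derivNumerator, eval_finsetSum]

lemma derivNumerator_zero (α : R) : derivNumerator α 0 = 1 := by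
  simp [derivNumerator, derivCoeff]

lemma derivNumerator_succ (α : R) (n : ℕ) :
    derivNumerator α (n + 1) =
      (C α + ((n : R[X]) + 1) * (1 + X) + ((n : R[X]) + 2) * X) * derivNumerator α n -
        X * (1 + X) * derivative (derivNumerator α n) := by
  have hX (k : ℕ) :
      (X * derivative (derivNumerator α n)).coeff k = k * derivCoeff α n k := by
    cases k <;> simp [coeff_derivative, coeff_derivNumerator, mul_comm]
  have hsplit (P : R[X]) :
      (C α + ((n : R[X]) + 1) * (1 + X) + ((n : R[X]) + 2) * X) * P - X * (1 + X) * derivative P =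
        C (α + n + 1) * P + X * (C (2 * n + 3 : R) * P - derivative P - X * derivative P) := by
    simp only [map_add, map_mul, map_natCast, map_one, map_ofNat]
    ring
  rw [hsplit]
  ext (_ | k)
  · simp [coeff_derivNumerator, derivCoeff_succ_zero, mul_coeff_zero]
  · simp only [coeff_add, coeff_sub, coeff_X_mul, coeff_C_mul, hX, coeff_derivative,
      coeff_derivNumerator, derivCoeff_succ_succ]
    ring

end Numerator

lemma iteratedDeriv_eqOn_of_hasDerivAt {𝕜 E : Type*} [NontriviallyNormedField 𝕜]
    [NormedAddCommGroup E] [NormedSpace 𝕜 E] {U : Set 𝕜} (hU : IsOpen U) {F : ℕ → 𝕜 → E}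
    (hF : ∀ n, ∀ x ∈ U, HasDerivAt (F n) (F (n + 1) x) x) (n : ℕ) :
    U.EqOn (iteratedDeriv n (F 0)) (F n) := by
  induction n with
  | zero => simp [Set.EqOn]
  | succ n ih =>
    intro x hx
    rw [iteratedDeriv_succ, (ih.eventuallyEq_of_mem (hU.mem_nhds hx)).deriv_eq, (hF n x hx).deriv]

-- On `-1 < t < 0` the base `1 + 1 / t` is negative, and `^` is the real part of the principal
-- branch of the power, which obeys the same differentiation rule.
lemma hasDerivAt_one_add_one_div_rpow (β : ℝ) {t : ℝ} (ht : t ≠ 0) (ht' : 1 + t ≠ 0) :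
    HasDerivAt (fun s : ℝ => (1 + 1 / s) ^ β) (-(β / (t * (1 + t))) * (1 + 1 / t) ^ β) t := by
  have hbase : 1 + 1 / t = (1 + t) / t := by rw [one_add_div ht, add_comm]
  have hbase_ne : 1 + 1 / t ≠ 0 := hbase ▸ div_ne_zero ht' ht
  have hderiv : HasDerivAt (fun s : ℝ => 1 + 1 / s) (-(t ^ 2)⁻¹) t := by
    simpa only [one_div] using (hasDerivAt_inv ht).const_add 1
  refine (hderiv.rpow_const (p := β) (Or.inl hbase_ne)).congr_deriv ?_
  rw [rpow_sub_one hbase_ne]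
  generalize (1 + 1 / t) ^ β = y
  rw [hbase]
  field_simp

lemma hasDerivAt_pow_mul_one_add_pow (a b : ℕ) {t : ℝ} (ht : t ≠ 0) (ht' : 1 + t ≠ 0) :
    HasDerivAt (fun s : ℝ => s ^ a * (1 + s) ^ b)
      ((a / t + b / (1 + t)) * (t ^ a * (1 + t) ^ b)) t := by
  have hpow (k : ℕ) {x : ℝ} (hx : x ≠ 0) : (k : ℝ) * x ^ (k - 1) = k / x * x ^ k := by
    cases k
    · simp
    · field_simp
      simp [pow_succ]
  refine ((hasDerivAt_pow a t).mul (((hasDerivAt_id t).const_add 1).pow b)).congr_deriv ?_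
  simp only [id_eq, mul_one, Pi.pow_apply, hpow a ht, hpow b ht']
  ring

lemma hasDerivAt_div_mul_rpow_mul (α c : ℝ) (a b : ℕ) {f : ℝ → ℝ} {f' t : ℝ} (ht : t ≠ 0)
    (ht' : 1 + t ≠ 0) (hf : HasDerivAt f f' t) :
    HasDerivAt (fun s : ℝ => c / (s ^ a * (1 + s) ^ b) * (1 + 1 / s) ^ α * f s)
      (-c / (t ^ (a + 1) * (1 + t) ^ (b + 1)) * (1 + 1 / t) ^ α *
        ((α + a * (1 + t) + b * t) * f t - t * (1 + t) * f')) t := by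
  have hden_ne : t ^ a * (1 + t) ^ b ≠ 0 := mul_ne_zero (pow_ne_zero _ ht) (pow_ne_zero _ ht')
  refine ((((hasDerivAt_const t c).div (hasDerivAt_pow_mul_one_add_pow a b ht ht') hden_ne).mul
    (hasDerivAt_one_add_one_div_rpow α ht ht')).mul hf).congr_deriv ?_
  simp only [Pi.mul_apply, Pi.div_apply]
  generalize (1 + 1 / t) ^ α = y
  field_simp
  ring

/-- The claimed closed form of the `(n + 1)`-st derivative of `H_α`. -/
noncomputable def derivFormula (α : ℝ) (n : ℕ) (t : ℝ) : ℝ :=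
  (-1) ^ (n + 1) / (t ^ (n + 1) * (1 + t) ^ (n + 2)) * (1 + 1 / t) ^ α *
    (derivNumerator α n).eval t

lemma hasDerivAt_derivFormula (α : ℝ) (n : ℕ) {t : ℝ} (ht : t ≠ 0) (ht' : 1 + t ≠ 0) :
    HasDerivAt (derivFormula α n) (derivFormula α (n + 1) t) t := by
  refine (hasDerivAt_div_mul_rpow_mul α ((-1) ^ (n + 1)) (n + 1) (n + 2) ht ht'
    ((derivNumerator α n).hasDerivAt t)).congr_deriv ?_
  simp only [derivFormula, derivNumerator_succ, Polynomial.eval_sub, Polynomial.eval_mul,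
    Polynomial.eval_add, Polynomial.eval_C, Polynomial.eval_natCast, Polynomial.eval_one,
    Polynomial.eval_X, Polynomial.eval_ofNat]
  push_cast
  ring

lemma hasDerivAt_rpow_div_sub_rpow_div {α t : ℝ} (hα₀ : α ≠ 0) (hα₁ : α ≠ 1) (ht : t ≠ 0)
    (ht' : 1 + t ≠ 0) :
    HasDerivAt (fun s : ℝ => (1 + 1 / s) ^ α / α - (1 + 1 / s) ^ (α - 1) / (α - 1))
      (derivFormula α 0 t) t := by
  have hbase : 1 + 1 / t = (1 + t) / t := by rw [one_add_div ht, add_comm]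
  have hα₁' : α - 1 ≠ 0 := sub_ne_zero.mpr hα₁
  refine (((hasDerivAt_one_add_one_div_rpow α ht ht').div_const α).sub
    ((hasDerivAt_one_add_one_div_rpow (α - 1) ht ht').div_const (α - 1))).congr_deriv ?_
  rw [rpow_sub_one (hbase ▸ div_ne_zero ht' ht), derivFormula, derivNumerator_zero,
    Polynomial.eval_one]
  generalize (1 + 1 / t) ^ α = y
  rw [hbase]
  field_simp
  ring

theorem H_alpha_iterated_deriv_formula_general {α : ℝ} (hα₀ : α ≠ 0) (hα₁ : α ≠ 1)
    {m : ℕ} (hm : 1 ≤ m) {t : ℝ} (ht : t ≠ 0) (ht' : 1 + t ≠ 0) :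
    iteratedDeriv m
        (fun s : ℝ => (1 + 1 / s) ^ α / α - (1 + 1 / s) ^ (α - 1) / (α - 1)) t =
      (-1 : ℝ) ^ m / (t ^ m * (1 + t) ^ (m + 1)) * (1 + 1 / t) ^ α *
        ∑ k ∈ Finset.range m,
          ((k.factorial : ℝ) * ((m + 1).choose k : ℝ) * ((m - 1).choose k : ℝ) *
            ∏ ℓ ∈ Finset.range (m - k - 1), (α + (ℓ + 1))) * t ^ k := by
  obtain ⟨n, rfl⟩ := Nat.exists_eq_add_of_le' hm
  have hU : IsOpen {s : ℝ | s ≠ 0 ∧ 1 + s ≠ 0} :=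
    isOpen_ne.inter (isOpen_ne_fun (by fun_prop) continuous_const)
  have hderiv : Set.EqOn (deriv fun s : ℝ => (1 + 1 / s) ^ α / α - (1 + 1 / s) ^ (α - 1) / (α - 1))
      (derivFormula α 0) {s | s ≠ 0 ∧ 1 + s ≠ 0} :=
    fun s hs => (hasDerivAt_rpow_div_sub_rpow_div hα₀ hα₁ hs.1 hs.2).deriv
  rw [iteratedDeriv_succ',
    (hderiv.eventuallyEq_of_mem (hU.mem_nhds ⟨ht, ht'⟩)).iteratedDeriv_eq,
    iteratedDeriv_eqOn_of_hasDerivAt hU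
      (fun n s hs => hasDerivAt_derivFormula α n hs.1 hs.2) n ⟨ht, ht'⟩,
    derivFormula, eval_derivNumerator]
  simp only [derivCoeff, Nat.add_sub_cancel, Nat.sub_right_comm _ _ 1]

theorem H_alpha_iterated_deriv_formula
    (α : ℝ) (hα : α ∈ Set.Ioo (0 : ℝ) 1)
    (m : ℕ) (hm : 1 ≤ m) (t : ℝ) (ht : 0 < t) :
    iteratedDeriv m
        (fun s : ℝ => (1 + 1 / s) ^ α / α - (1 + 1 / s) ^ (α - 1) / (α - 1)) t =
      (-1 : ℝ) ^ m / (t ^ m * (1 + t) ^ (m + 1)) * (1 + 1 / t) ^ α *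
        ∑ k ∈ Finset.range m,
          ((k.factorial : ℝ) * ((m + 1).choose k : ℝ) * ((m - 1).choose k : ℝ) *
            ∏ ℓ ∈ Finset.range (m - k - 1), (α + (ℓ + 1))) * t ^ k :=
  H_alpha_iterated_deriv_formula_general hα.1.ne' hα.2.ne hm ht.ne' (by positivity)
end

section
/- Let λ ∈ (0, 1) and x > y > 0. Then for every real t > −y, the weighted geometric mean admits the integral representation G_{x,y;λ}(t) = x^λ y^{1−λ} + t + (sin(λπ)/π) · (x−y) · ∫₀^∞ (F(λ, (x−y)s)/s) · e^{−sy} · (1 − e^{−st}) ds, where F(λ,s) = ∫₀¹ (1/u − 1)^λ (1 − λ/(1−u)) e^{−us} du. -/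
open Real MeasureTheory

/-- The function `F(λ, s)` from the paper. -/
noncomputable def paperF (lam s : ℝ) : ℝ :=
  ∫ u in (0 : ℝ)..1, (1 / u - 1) ^ lam * (1 - lam / (1 - u)) * Real.exp (-u * s)

/-!
The Laplace transform of `s ↦ F(λ, (x - y) s) / s` at `y` is a multiple of the weighted AM-GM gap
`λ x + (1 - λ) y - x ^ λ * y ^ (1 - λ)`. The factor `1 - exp (-s t)` subtracts the transform at
`y + t`, that is, the gap of `x + t` and `y + t`, in which the arithmetic mean has grown by `t`.

To compute the transform, note that the weight in `F` is the derivative of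
`u ^ (1 - λ) * (1 - u) ^ λ`. Integration by parts cancels the division by `s`, and Fubini's theorem
leaves the integral of `u ^ (1 - λ) * (1 - u) ^ λ / m` with `m = (1 - u) * y + u * x`. Since
`(x - y) ^ 2 * u * (1 - u) = (m - y) * (x - m)`, this integral splits into beta integrals and
`∫ u ^ (-λ) * (1 - u) ^ (λ - 1) / m`, which is Feynman's parametric integral.
-/

open Set ProbabilityTheory

section BetaKernel

variable {p q a b u v : ℝ}

/-- The integrand `u ^ (p - 1) * (1 - u) ^ (q - 1)` of Euler's beta integral, i.e. the density of
the beta distribution without its normalizing constant. It is used only on `[0, 1]`; elsewhere its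
values are those of `Real.rpow` at a negative base. -/
noncomputable def betaKernel (p q u : ℝ) : ℝ :=
  u ^ (p - 1) * (1 - u) ^ (q - 1)

lemma betaKernel_add_one_left (hu : u ≠ 0) :
    betaKernel (p + 1) q u = u * betaKernel p q u := by
  rw [betaKernel, betaKernel, add_sub_right_comm, rpow_add_one hu]
  ring

lemma betaKernel_add_one_right (hu : u ≠ 1) :
    betaKernel p (q + 1) u = (1 - u) * betaKernel p q u := by
  rw [betaKernel, betaKernel, add_sub_right_comm, rpow_add_one (sub_ne_zero.2 hu.symm)]
  ring

lemma continuous_betaKernel_add_one (hp : 0 ≤ p) (hq : 0 ≤ q) :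
    Continuous (betaKernel (p + 1) (q + 1)) := by
  unfold betaKernel
  simp only [add_sub_cancel_right]
  exact (continuous_id.rpow_const fun _ ↦ .inr hp).mul
    ((continuous_const.sub continuous_id).rpow_const fun _ ↦ .inr hq)

lemma hasDerivAt_betaKernel_add_one (hu₀ : u ≠ 0) (hu₁ : u ≠ 1) :
    HasDerivAt (betaKernel (p + 1) (q + 1))
      (p * betaKernel p (q + 1) u - q * betaKernel (p + 1) q u) u := by
  have hleft : HasDerivAt (fun u : ℝ ↦ u ^ (p + 1 - 1)) (p * u ^ (p - 1)) u := by
    simpa using hasDerivAt_rpow_const (p := p) (.inl hu₀)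
  have hright : HasDerivAt (fun u : ℝ ↦ (1 - u) ^ (q + 1 - 1)) (-(q * (1 - u) ^ (q - 1))) u := by
    simpa using ((hasDerivAt_id u).const_sub 1).rpow_const (p := q)
      (.inl (sub_ne_zero.2 hu₁.symm))
  refine (hleft.mul hright).congr_deriv ?_
  simp only [betaKernel]
  ring

lemma ofReal_betaKernel (hu : u ∈ Icc (0 : ℝ) 1) :
    (betaKernel p q u : ℂ) = (u : ℂ) ^ ((p : ℂ) - 1) * (1 - (u : ℂ)) ^ ((q : ℂ) - 1) := by
  rw [betaKernel, Complex.ofReal_mul, Complex.ofReal_cpow hu.1,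
    Complex.ofReal_cpow (sub_nonneg.2 hu.2)]
  push_cast
  rfl

lemma integral_betaKernel (hp : 0 < p) (hq : 0 < q) :
    ∫ u in Ioo (0 : ℝ) 1, betaKernel p q u = beta p q := by
  rw [beta_eq_betaIntegralReal p q hp hq, Complex.betaIntegral,
    intervalIntegral.integral_of_le zero_le_one, integral_Ioc_eq_integral_Ioo,
    ← setIntegral_congr_fun measurableSet_Ioo
      fun u hu ↦ ofReal_betaKernel (Ioo_subset_Icc_self hu),
    integral_complex_ofReal, Complex.ofReal_re]

lemma integrableOn_betaKernel (hp : 0 < p) (hq : 0 < q) :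
    IntegrableOn (betaKernel p q) (Ioo 0 1) :=
  .of_integral_ne_zero <| by
    rw [integral_betaKernel hp hq]
    exact (beta_pos hp hq).ne'

lemma beta_add_one_left (hp : p ≠ 0) (hpq : p + q ≠ 0) :
    beta (p + 1) q = p / (p + q) * beta p q := by
  rw [beta, beta, add_right_comm, Gamma_add_one hp, Gamma_add_one hpq, mul_assoc,
    div_mul_div_comm, mul_div_mul_comm]

lemma min_le_convexCombo (hu : u ∈ Icc (0 : ℝ) 1) : min a b ≤ (1 - u) * a + u * b := by
  simpa using Convex.min_le_combo a b (sub_nonneg.2 hu.2) hu.1 (sub_add_cancel 1 u)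

lemma convexCombo_pos (ha : 0 < a) (hb : 0 < b) (hu : u ∈ Icc (0 : ℝ) 1) :
    0 < (1 - u) * a + u * b :=
  (lt_min ha hb).trans_le (min_le_convexCombo hu)

/-- The Möbius transformation fixing `0` and `1` with derivative `b / a` at `0`. For positive `a`,
`b` it maps `(0, 1)` onto itself, with inverse `unitMoebius b a`, and is the substitution which
evaluates Feynman's parametric integral. -/
noncomputable def unitMoebius (a b v : ℝ) : ℝ :=
  v * b / ((1 - v) * a + v * b)

lemma one_sub_unitMoebius (h : (1 - v) * a + v * b ≠ 0) :
    1 - unitMoebius a b v = (1 - v) * a / ((1 - v) * a + v * b) := by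
  rw [unitMoebius, one_sub_div h, add_sub_cancel_right]

lemma convexCombo_unitMoebius (h : (1 - v) * a + v * b ≠ 0) :
    (1 - unitMoebius a b v) * b + unitMoebius a b v * a = a * b / ((1 - v) * a + v * b) := by
  rw [one_sub_unitMoebius h, unitMoebius]
  field_simp
  ring

lemma unitMoebius_unitMoebius (ha : a ≠ 0) (hb : b ≠ 0) (h : (1 - v) * a + v * b ≠ 0) :
    unitMoebius b a (unitMoebius a b v) = v := by
  rw [unitMoebius, convexCombo_unitMoebius h, unitMoebius]
  field_simp

lemma unitMoebius_mem_Ioo (ha : 0 < a) (hb : 0 < b) (hv : v ∈ Ioo (0 : ℝ) 1) :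
    unitMoebius a b v ∈ Ioo (0 : ℝ) 1 := by
  have hD := convexCombo_pos ha hb (Ioo_subset_Icc_self hv)
  refine ⟨div_pos (mul_pos hv.1 hb) hD, sub_pos.1 ?_⟩
  rw [one_sub_unitMoebius hD.ne']
  exact div_pos (mul_pos (sub_pos.2 hv.2) ha) hD

lemma bijOn_unitMoebius (ha : 0 < a) (hb : 0 < b) :
    BijOn (unitMoebius a b) (Ioo 0 1) (Ioo 0 1) :=
  InvOn.bijOn (f' := unitMoebius b a)
    ⟨fun _ hv ↦ unitMoebius_unitMoebius ha.ne' hb.ne'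
        (convexCombo_pos ha hb (Ioo_subset_Icc_self hv)).ne',
      fun _ hv ↦ unitMoebius_unitMoebius hb.ne' ha.ne'
        (convexCombo_pos hb ha (Ioo_subset_Icc_self hv)).ne'⟩
    (fun _ ↦ unitMoebius_mem_Ioo ha hb) (fun _ ↦ unitMoebius_mem_Ioo hb ha)

lemma hasDerivAt_unitMoebius (h : (1 - v) * a + v * b ≠ 0) :
    HasDerivAt (unitMoebius a b) (a * b / ((1 - v) * a + v * b) ^ 2) v := by
  have hnum : HasDerivAt (fun v : ℝ ↦ v * b) b v := by
    simpa using (hasDerivAt_id v).mul_const b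
  have hden : HasDerivAt (fun v : ℝ ↦ (1 - v) * a + v * b) (-a + b) v := by
    simpa using! (((hasDerivAt_id v).const_sub 1).mul_const a).add hnum
  refine (hnum.div hden h).congr_deriv ?_
  ring

lemma betaKernel_unitMoebius (ha : 0 < a) (hb : 0 < b) (hv : v ∈ Ioo (0 : ℝ) 1) :
    betaKernel p q (unitMoebius a b v) =
      a ^ (q - 1) * b ^ (p - 1) / ((1 - v) * a + v * b) ^ (p + q - 2) * betaKernel p q v := by
  have hD := convexCombo_pos ha hb (Ioo_subset_Icc_self hv)
  have hv₁ := sub_pos.2 hv.2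
  have hsplit : ((1 - v) * a + v * b) ^ (p + q - 2) =
      ((1 - v) * a + v * b) ^ (p - 1) * ((1 - v) * a + v * b) ^ (q - 1) := by
    rw [← rpow_add hD]
    ring_nf
  rw [betaKernel, one_sub_unitMoebius hD.ne', unitMoebius,
    div_rpow (mul_pos hv.1 hb).le hD.le, div_rpow (mul_pos hv₁ ha).le hD.le,
    mul_rpow hv.1.le hb.le, mul_rpow hv₁.le ha.le, hsplit, betaKernel]
  ring

lemma integral_betaKernel_div_convexCombo_rpow (hp : 0 < p) (hq : 0 < q) (ha : 0 < a)
    (hb : 0 < b) :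
    ∫ u in Ioo (0 : ℝ) 1, betaKernel p q u / ((1 - u) * b + u * a) ^ (p + q) =
      beta p q / (a ^ p * b ^ q) := by
  have hsubst := integral_image_eq_integral_abs_deriv_smul measurableSet_Ioo
    (fun v hv ↦ (hasDerivAt_unitMoebius
      (convexCombo_pos ha hb (Ioo_subset_Icc_self hv)).ne').hasDerivWithinAt)
    (bijOn_unitMoebius ha hb).injOn
    fun u ↦ betaKernel p q u / ((1 - u) * b + u * a) ^ (p + q)
  rw [(bijOn_unitMoebius ha hb).image_eq] at hsubst
  rw [hsubst, ← integral_betaKernel hp hq, ← integral_div]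
  refine setIntegral_congr_fun measurableSet_Ioo fun v hv ↦ ?_
  have hD := convexCombo_pos ha hb (Ioo_subset_Icc_self hv)
  simp only [smul_eq_mul]
  rw [convexCombo_unitMoebius hD.ne', betaKernel_unitMoebius ha hb hv,
    abs_of_pos (div_pos (mul_pos ha hb) (pow_pos hD 2)), div_rpow (mul_pos ha hb).le hD.le,
    mul_rpow ha.le hb.le, rpow_sub hD, rpow_sub_one ha.ne', rpow_sub_one hb.ne',
    rpow_add ha, rpow_add hb, rpow_two]
  have hDpq := (rpow_pos_of_pos hD (p + q)).ne'
  generalize (1 - v) * a + v * b = D at hD hDpq ⊢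
  field_simp

lemma integrableOn_betaKernel_div_convexCombo_rpow (hp : 0 < p) (hq : 0 < q) (ha : 0 < a)
    (hb : 0 < b) :
    IntegrableOn (fun u ↦ betaKernel p q u / ((1 - u) * b + u * a) ^ (p + q)) (Ioo 0 1) :=
  .of_integral_ne_zero <| by
    rw [integral_betaKernel_div_convexCombo_rpow hp hq ha hb]
    exact (div_pos (beta_pos hp hq) (by positivity)).ne'

lemma sq_sub_mul_betaKernel_div_convexCombo (hu₀ : u ≠ 0) (hu₁ : u ≠ 1)
    (h : (1 - u) * b + u * a ≠ 0) :
    (a - b) ^ 2 * (betaKernel (p + 1) (q + 1) u / ((1 - u) * b + u * a)) =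
      a * betaKernel p q u - (a - b) * betaKernel (p + 1) q u -
        a * b * (betaKernel p q u / ((1 - u) * b + u * a)) := by
  rw [mul_div_assoc', div_eq_iff h, sub_mul, mul_assoc (a * b), div_mul_cancel₀ _ h,
    betaKernel_add_one_right hu₁, betaKernel_add_one_left hu₀]
  ring

lemma sq_sub_mul_integral_betaKernel_div_convexCombo (hp : 0 < p) (hq : 0 < q) (hpq : p + q = 1)
    (ha : 0 < a) (hb : 0 < b) :
    (a - b) ^ 2 * ∫ u in Ioo (0 : ℝ) 1, betaKernel (p + 1) (q + 1) u / ((1 - u) * b + u * a) =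
      beta p q * (q * a + p * b - a ^ q * b ^ p) := by
  have hfeynman := integral_betaKernel_div_convexCombo_rpow hp hq ha hb
  have hint := integrableOn_betaKernel_div_convexCombo_rpow hp hq ha hb
  simp only [hpq, rpow_one] at hfeynman hint
  have hint₀ := (integrableOn_betaKernel hp hq).const_mul a
  have hint₁ := (integrableOn_betaKernel (p := p + 1) (by positivity) hq).const_mul (a - b)
  have hint₀₁ : IntegrableOn
      (fun u ↦ a * betaKernel p q u - (a - b) * betaKernel (p + 1) q u) (Ioo 0 1) :=
    hint₀.sub hint₁
  have hgeom : a * b / (a ^ p * b ^ q) = a ^ q * b ^ p := by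
    have ha_pow : a ^ p * a ^ q = a := by rw [← rpow_add ha, hpq, rpow_one]
    have hb_pow : b ^ p * b ^ q = b := by rw [← rpow_add hb, hpq, rpow_one]
    rw [div_eq_iff (by positivity)]
    linear_combination -b * ha_pow - a ^ p * a ^ q * hb_pow
  rw [← integral_const_mul, setIntegral_congr_fun measurableSet_Ioo fun u hu ↦
      sq_sub_mul_betaKernel_div_convexCombo hu.1.ne' hu.2.ne
        (convexCombo_pos hb ha (Ioo_subset_Icc_self hu)).ne',
    integral_sub hint₀₁ (hint.const_mul _), integral_sub hint₀ hint₁,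
    integral_const_mul, integral_const_mul, integral_const_mul, hfeynman,
    integral_betaKernel hp hq, integral_betaKernel (by positivity) hq,
    beta_add_one_left hp.ne' (by positivity), hpq]
  linear_combination (-beta p q) * hgeom - a * beta p q * hpq

end BetaKernel

section Laplace

variable {α : Type*} [MeasurableSpace α] {μ : Measure α} {f m : α → ℝ} {c : ℝ}

lemma integrable_prod_mul_exp_neg_mul [SFinite μ] (hf : Integrable f μ) (hm : AEMeasurable m μ)
    (hc : 0 < c) (hcm : ∀ᵐ u ∂μ, c ≤ m u) :
    Integrable (fun z : ℝ × α ↦ f z.2 * exp (-m z.2 * z.1))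
      ((volume.restrict (Ioi 0)).prod μ) := by
  have hmeas : AEStronglyMeasurable (fun z : ℝ × α ↦ f z.2 * exp (-m z.2 * z.1))
      ((volume.restrict (Ioi 0)).prod μ) :=
    hf.aestronglyMeasurable.comp_snd.mul
      (hm.comp_snd.neg.mul measurable_fst.aemeasurable).exp.aestronglyMeasurable
  refine ((exp_neg_integrableOn_Ioi 0 hc).mul_prod hf).mono hmeas ?_
  filter_upwards [Measure.quasiMeasurePreserving_fst.ae (ae_restrict_mem measurableSet_Ioi),
    Measure.quasiMeasurePreserving_snd.ae hcm] with z (hs : 0 < z.1) hcz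
  rw [norm_mul, norm_mul, mul_comm, norm_eq_abs, abs_exp, norm_eq_abs (exp _), abs_exp]
  gcongr

lemma integral_Ioi_integral_mul_exp_neg_mul [SFinite μ] (hf : Integrable f μ)
    (hm : AEMeasurable m μ) (hc : 0 < c) (hcm : ∀ᵐ u ∂μ, c ≤ m u) :
    ∫ s in Ioi (0 : ℝ), ∫ u, f u * exp (-m u * s) ∂μ = ∫ u, f u / m u ∂μ := by
  rw [integral_integral_swap (integrable_prod_mul_exp_neg_mul hf hm hc hcm)]
  refine integral_congr_ae ?_
  filter_upwards [hcm] with u hu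
  rw [integral_const_mul, integral_exp_mul_Ioi (neg_lt_zero.2 (hc.trans_le hu)), mul_zero,
    exp_zero, neg_div_neg_eq, mul_one_div]

lemma intervalIntegral_deriv_mul_exp_neg_mul {f f' : ℝ → ℝ} {a b : ℝ} (hab : a ≤ b)
    (hf : ContinuousOn f (Icc a b)) (hderiv : ∀ u ∈ Ioo a b, HasDerivAt f (f' u) u)
    (hf' : IntervalIntegrable f' volume a b) (ha : f a = 0) (hb : f b = 0) (s : ℝ) :
    ∫ u in a..b, f' u * exp (-u * s) = s * ∫ u in a..b, f u * exp (-u * s) := by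
  rw [← uIcc_of_le hab] at hf
  rw [← uIoo_of_le hab] at hderiv
  have hexp : ∀ u : ℝ, HasDerivAt (fun u : ℝ ↦ exp (-u * s)) (-s * exp (-u * s)) u := fun u ↦ by
    simpa [mul_comm] using ((hasDerivAt_id u).neg.mul_const s).exp
  have hparts := intervalIntegral.integral_mul_deriv_eq_deriv_mul_of_hasDerivAt hf (by fun_prop)
    hderiv (fun u _ ↦ hexp u) hf'
    (Continuous.intervalIntegrable (by fun_prop) a b)
  simp only [mul_left_comm (f _), intervalIntegral.integral_const_mul, ha, hb] at hparts
  linear_combination hparts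

end Laplace

section PaperF

variable {lam a b : ℝ}

lemma paperF_weight_eq {u : ℝ} (hu : u ∈ Ioo (0 : ℝ) 1) :
    (1 / u - 1) ^ lam * (1 - lam / (1 - u)) =
      (1 - lam) * betaKernel (1 - lam) (lam + 1) u - lam * betaKernel (1 - lam + 1) lam u := by
  have hu₀ := hu.1
  have hu₁ := sub_pos.2 hu.2
  rw [betaKernel_add_one_right hu.2.ne, betaKernel_add_one_left hu.1.ne', betaKernel,
    div_sub_one hu₀.ne', div_rpow hu₁.le hu₀.le, sub_sub_cancel_left, rpow_neg hu₀.le,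
    rpow_sub_one hu₁.ne']
  field_simp
  ring

lemma paperF_eq_mul_integral (hlam : lam ∈ Ioo (0 : ℝ) 1) (s : ℝ) :
    paperF lam s =
      s * ∫ u in Ioo (0 : ℝ) 1, betaKernel (1 - lam + 1) (lam + 1) u * exp (-u * s) := by
  have hp := sub_pos.2 hlam.2
  have hq := hlam.1
  have hderiv_int : IntervalIntegrable (fun u ↦ (1 - lam) * betaKernel (1 - lam) (lam + 1) u -
      lam * betaKernel (1 - lam + 1) lam u) volume 0 1 :=
    (intervalIntegrable_iff_integrableOn_Ioo_of_le zero_le_one).2 <|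
      ((integrableOn_betaKernel hp (by positivity)).const_mul _).sub
        ((integrableOn_betaKernel (by positivity) hq).const_mul _)
  have hparts := intervalIntegral_deriv_mul_exp_neg_mul zero_le_one
    (continuous_betaKernel_add_one hp.le hq.le).continuousOn
    (fun u hu ↦ hasDerivAt_betaKernel_add_one hu.1.ne' hu.2.ne) hderiv_int
    (by simp [betaKernel, zero_rpow hp.ne']) (by simp [betaKernel, zero_rpow hq.ne']) s
  simp only [intervalIntegral.integral_of_le zero_le_one, integral_Ioc_eq_integral_Ioo] at hparts
  rw [← hparts, paperF, intervalIntegral.integral_of_le zero_le_one, integral_Ioc_eq_integral_Ioo]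
  exact setIntegral_congr_fun measurableSet_Ioo fun u hu ↦ by simp only [paperF_weight_eq hu]

lemma paperF_div_mul_exp (hlam : lam ∈ Ioo (0 : ℝ) 1) (a b : ℝ) {s : ℝ} (hs : s ≠ 0) :
    paperF lam ((a - b) * s) / s * exp (-s * b) =
      (a - b) * ∫ u in Ioo (0 : ℝ) 1,
        betaKernel (1 - lam + 1) (lam + 1) u * exp (-((1 - u) * b + u * a) * s) := by
  have hexp : ∀ u : ℝ, betaKernel (1 - lam + 1) (lam + 1) u * exp (-((1 - u) * b + u * a) * s) =
      exp (-s * b) *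
        (betaKernel (1 - lam + 1) (lam + 1) u * exp (-u * ((a - b) * s))) := fun u ↦ by
    rw [mul_left_comm, ← exp_add]
    ring_nf
  simp only [hexp, integral_const_mul, paperF_eq_mul_integral hlam]
  field_simp

lemma beta_one_sub_self (lam : ℝ) : beta (1 - lam) lam = π / sin (lam * π) := by
  rw [beta, sub_add_cancel, Gamma_one, div_one, mul_comm, Gamma_mul_Gamma_one_sub, mul_comm π]

lemma sin_mul_pi_pos (hlam : lam ∈ Ioo (0 : ℝ) 1) : 0 < sin (lam * π) :=
  sin_pos_of_pos_of_lt_pi (mul_pos hlam.1 pi_pos) (mul_lt_of_lt_one_left pi_pos hlam.2)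

lemma min_le_convexCombo_ae (a b : ℝ) :
    ∀ᵐ u ∂volume.restrict (Ioo (0 : ℝ) 1), min b a ≤ (1 - u) * b + u * a :=
  ae_restrict_of_forall_mem measurableSet_Ioo fun _ hu ↦
    min_le_convexCombo (Ioo_subset_Icc_self hu)

lemma integrableOn_paperF_div_mul_exp (hlam : lam ∈ Ioo (0 : ℝ) 1) (ha : 0 < a) (hb : 0 < b) :
    IntegrableOn (fun s ↦ paperF lam ((a - b) * s) / s * exp (-s * b)) (Ioi 0) := by
  have hint := integrable_prod_mul_exp_neg_mul
    (integrableOn_betaKernel (p := 1 - lam + 1) (q := lam + 1) (by linarith [hlam.2])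
      (by linarith [hlam.1])) (by fun_prop) (lt_min hb ha) (min_le_convexCombo_ae a b)
  refine IntegrableOn.congr_fun (hint.integral_prod_left.const_mul (a - b)) (fun s hs ↦ ?_)
    measurableSet_Ioi
  exact (paperF_div_mul_exp hlam a b (ne_of_gt hs)).symm

lemma integral_paperF_div_mul_exp (hlam : lam ∈ Ioo (0 : ℝ) 1) (ha : 0 < a) (hb : 0 < b) :
    sin (lam * π) / π * (a - b) *
        ∫ s in Ioi (0 : ℝ), paperF lam ((a - b) * s) / s * exp (-s * b) =
      lam * a + (1 - lam) * b - a ^ lam * b ^ (1 - lam) := by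
  have hlaplace := integral_Ioi_integral_mul_exp_neg_mul
    (integrableOn_betaKernel (p := 1 - lam + 1) (q := lam + 1) (by linarith [hlam.2])
      (by linarith [hlam.1])) (by fun_prop) (lt_min hb ha) (min_le_convexCombo_ae a b)
  have hgap := sq_sub_mul_integral_betaKernel_div_convexCombo (sub_pos.2 hlam.2) hlam.1
    (sub_add_cancel 1 lam) ha hb
  have hsin := (sin_mul_pi_pos hlam).ne'
  rw [setIntegral_congr_fun measurableSet_Ioi
      fun s hs ↦ paperF_div_mul_exp hlam a b (ne_of_gt hs),
    integral_const_mul, hlaplace, mul_assoc, ← mul_assoc (a - b), ← sq, hgap, beta_one_sub_self]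
  field_simp

end PaperF

theorem weighted_geometric_mean_integral_representation_general
    {lam x y t : ℝ} (hlam : lam ∈ Ioo (0 : ℝ) 1) (hx : 0 < x) (hy : 0 < y) (hxt : -x < t)
    (hyt : -y < t) :
    (x + t) ^ lam * (y + t) ^ (1 - lam) =
      x ^ lam * y ^ (1 - lam) + t +
        sin (lam * π) / π * (x - y) *
          ∫ s in Ioi (0 : ℝ),
            paperF lam ((x - y) * s) / s * exp (-s * y) * (1 - exp (-s * t)) := by
  have hxt' : 0 < x + t := by linarith
  have hyt' : 0 < y + t := by linarith
  have hint := integrableOn_paperF_div_mul_exp hlam hx hy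
  have hint_t := integrableOn_paperF_div_mul_exp hlam hxt' hyt'
  have hgap := integral_paperF_div_mul_exp hlam hx hy
  have hgap_t := integral_paperF_div_mul_exp hlam hxt' hyt'
  rw [add_sub_add_right_eq_sub] at hint_t hgap_t
  have hsplit : ∀ s, paperF lam ((x - y) * s) / s * exp (-s * y) * (1 - exp (-s * t)) =
      paperF lam ((x - y) * s) / s * exp (-s * y) -
        paperF lam ((x - y) * s) / s * exp (-s * (y + t)) := fun s ↦ by
    rw [mul_add, exp_add]
    ring
  simp only [hsplit]
  rw [integral_sub hint hint_t]
  linear_combination hgap_t - hgap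

theorem weighted_geometric_mean_integral_representation
    (lam x y : ℝ) (hlam : lam ∈ Set.Ioo (0 : ℝ) 1)
    (hxy : x > y) (hy : 0 < y) (t : ℝ) (ht : -y < t) :
    (x + t) ^ lam * (y + t) ^ (1 - lam) =
      x ^ lam * y ^ (1 - lam) + t +
        Real.sin (lam * π) / π * (x - y) *
          ∫ s in Set.Ioi (0 : ℝ),
            paperF lam ((x - y) * s) / s * Real.exp (-s * y) *
              (1 - Real.exp (-s * t)) :=
  weighted_geometric_mean_integral_representation_general hlam (hy.trans hxy) hy (by linarith) ht
end
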